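/- Let N ≥ 1, let G be a subgroup of the permutation group of Fin N, and for α ∈ G let U_α be the permutation matrix on (Fin N → Fin 2) of the bijection x ↦ x ∘ α. Then for every A ∈ SU(2^N) with U_α A U_α⁻¹ = A for all α ∈ G, there exists a traceless skew-Hermitian matrix a with U_α a U_α⁻¹ = a for all α ∈ G such that A = exp(a). -/

import Mathlib

open Matrix

/-- The permutation matrix on the index set `I → Fin 2` associated to a permutation `α` of
`I`, corresponding to the bijection `x ↦ x ∘ α`: its `(x, y)` entry is `1` if `y = x ∘ α`
and `0` otherwise. -/
def qubitPermMatrix {I : Type*} [DecidableEq I] [Fintype I] (α : Equiv.Perm I) :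
    Matrix (I → Fin 2) (I → Fin 2) ℂ :=
  Matrix.of fun x y => if y = x ∘ α then 1 else 0

open scoped Matrix.Norms.L2Operator in
lemma exists_log_aux {n : Type*} [Fintype n] [DecidableEq n] (A : Matrix n n ℂ)
    (hA : A * Aᴴ = 1) :
    ∃ a : Matrix n n ℂ, aᴴ = -a ∧ A = NormedSpace.exp a ∧
      ∀ B : Matrix n n ℂ, Commute A B → Commute a B := by
  have hA' : Aᴴ * A = 1 := mul_eq_one_comm.mp hA
  have hU : A ∈ unitary (Matrix n n ℂ) := ⟨hA', hA⟩
  have hn : IsStarNormal A := ⟨by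
    show star A * A = A * star A
    rw [star_eq_conjTranspose, hA, hA']⟩
  have hspec : ∀ z ∈ spectrum ℂ A, ‖z‖ = 1 := fun z hz => by
    simpa using spectrum.subset_circle_of_unitary hU hz
  let f : ℂ → ℂ := fun z => (Complex.arg z : ℂ) * Complex.I
  have hf : ContinuousOn f (spectrum ℂ A) := (Matrix.finite_spectrum A).continuousOn f
  refine ⟨cfc f A, ?_, ?_, ?_⟩
  · rw [← star_eq_conjTranspose, ← cfc_star, ← cfc_neg]
    congr 1
    ext z
    simp [f]
  · rw [← CFC.complex_exp_eq_normedSpace_exp (cfc_predicate f A),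
      ← cfc_comp' Complex.exp f A (Complex.continuous_exp.continuousOn) hf]
    conv_lhs => rw [← cfc_id ℂ A]
    apply cfc_congr
    intro z hz
    have := Complex.norm_mul_exp_arg_mul_I z
    rw [hspec z hz] at this
    simpa [f] using this.symm
  · intro B hB
    refine Commute.cfc hB ?_ f
    show Aᴴ * B = B * Aᴴ
    calc Aᴴ * B = Aᴴ * (B * A) * Aᴴ := by simp [Matrix.mul_assoc, hA]
      _ = Aᴴ * (A * B) * Aᴴ := by rw [hB.eq]
      _ = B * Aᴴ := by rw [← Matrix.mul_assoc, hA', Matrix.one_mul]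

open scoped Matrix.Norms.L2Operator in
lemma exp_proj_aux {n : Type*} [Fintype n] [DecidableEq n] (P : Matrix n n ℂ)
    (hP : Pᴴ = P) (hPP : P * P = P) (k : ℤ) :
    NormedSpace.exp ((-(k * (2 * Real.pi * Complex.I)) : ℂ) • P) = 1 := by
  have hn : IsStarNormal P := ⟨by
    show star P * P = P * star P
    rw [star_eq_conjTranspose, hP]⟩
  set c : ℂ := -(k * (2 * Real.pi * Complex.I)) with hc
  have e : c • P = cfc (fun z : ℂ => c * z) P := (cfc_const_mul_id c P).symm
  rw [e, ← CFC.complex_exp_eq_normedSpace_exp (cfc_predicate _ P),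
      ← cfc_comp' Complex.exp _ P (Complex.continuous_exp.continuousOn)]
  rw [← cfc_const_one ℂ P]
  apply cfc_congr
  intro z hz
  rcases IsIdempotentElem.spectrum_subset ℂ (show IsIdempotentElem P from hPP) hz with h | h
  · simp [h]
  · have h : z = 1 := h
    simp only [h, mul_one, hc, Complex.exp_neg, Complex.exp_int_mul_two_pi_mul_I, inv_one]

lemma det_exp_aux {n : Type*} [Fintype n] [DecidableEq n] (a : Matrix n n ℂ)
    (ha : aᴴ = -a) : (NormedSpace.exp a).det = Complex.exp a.trace := by
  have hH : (Complex.I • a).IsHermitian := by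
    rw [Matrix.IsHermitian, conjTranspose_smul, ha]; simp
  set U : Matrix n n ℂ := (hH.eigenvectorUnitary : Matrix n n ℂ) with hU
  have hUU : U * star U = 1 := (Matrix.mem_unitaryGroup_iff).mp hH.eigenvectorUnitary.2
  have hUi : U⁻¹ = star U := Matrix.inv_eq_right_inv hUU
  have hUu : IsUnit U := IsUnit.of_mul_eq_one _ hUU
  have hdet : IsUnit U.det := (Matrix.isUnit_iff_isUnit_det U).mp hUu
  let d : n → ℂ := fun i => -Complex.I * (hH.eigenvalues i : ℂ)
  have hs : a = U * diagonal d * U⁻¹ := by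
    have h1 : a = (-Complex.I) • (Complex.I • a) := by simp [smul_smul]
    rw [h1, hH.spectral_theorem, hUi, Unitary.conjStarAlgAut_apply]
    have : diagonal d = (-Complex.I) • diagonal (RCLike.ofReal ∘ hH.eigenvalues : n → ℂ) := by
      ext i j
      by_cases h : i = j
      · subst h; simp [d]
      · simp [h]
    rw [this]
    simp [hU]
  have ht : a.trace = ∑ i, d i := by
    rw [hs, Matrix.trace_mul_comm, ← Matrix.mul_assoc, Matrix.nonsing_inv_mul _ hdet,
      Matrix.one_mul, trace_diagonal]
  rw [ht, hs, Matrix.exp_conj _ _ hUu, det_mul, det_mul, mul_right_comm, ← det_mul,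
    Matrix.mul_nonsing_inv _ hdet, det_one, one_mul, Matrix.exp_diagonal, det_diagonal,
    Complex.exp_sum]
  refine Finset.prod_congr rfl fun i _ => ?_
  rw [Complex.exp_eq_exp_ℂ]
  exact Pi.coe_exp d i

lemma qubit_mulVec {I : Type*} [DecidableEq I] [Fintype I] (α : Equiv.Perm I)
    (v : (I → Fin 2) → ℂ) (x : I → Fin 2) : (qubitPermMatrix α *ᵥ v) x = v (x ∘ α) := by
  simp [qubitPermMatrix, Matrix.mulVec, dotProduct]

lemma qubit_mul_inv {I : Type*} [DecidableEq I] [Fintype I] (α : Equiv.Perm I) :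
    qubitPermMatrix α * qubitPermMatrix α⁻¹ = 1 := by
  apply Matrix.ext_of_mulVec_single
  intro i
  rw [← Matrix.mulVec_mulVec]
  ext x
  rw [qubit_mulVec, qubit_mulVec, Matrix.one_mulVec]
  congr 1
  ext j
  simp

lemma qubit_conj_iff {I : Type*} [DecidableEq I] [Fintype I] (α : Equiv.Perm I)
    (B : Matrix (I → Fin 2) (I → Fin 2) ℂ) :
    qubitPermMatrix α * B * (qubitPermMatrix α)⁻¹ = B ↔ Commute B (qubitPermMatrix α) := by
  have hu : IsUnit (qubitPermMatrix α).det :=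
    (Matrix.isUnit_iff_isUnit_det _).mp (IsUnit.of_mul_eq_one _ (qubit_mul_inv α))
  constructor
  · intro h
    show B * _ = _ * B
    conv_lhs => rw [← h]
    rw [Matrix.mul_assoc, Matrix.nonsing_inv_mul _ hu, Matrix.mul_one]
  · intro h
    rw [← h.eq, Matrix.mul_assoc, Matrix.mul_nonsing_inv _ hu, Matrix.mul_one]

lemma qubit_conjTranspose {I : Type*} [DecidableEq I] [Fintype I] (α : Equiv.Perm I) :
    (qubitPermMatrix α)ᴴ = qubitPermMatrix α⁻¹ := by
  ext x y
  have : x = y ∘ α ↔ y = x ∘ ⇑α⁻¹ := by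
    constructor
    · rintro rfl; ext j; simp
    · rintro rfl; ext j; simp
  simp only [qubitPermMatrix, conjTranspose_apply, of_apply, this]
  split_ifs <;> simp

open scoped ComplexOrder in
lemma dot_ne_aux {n : Type*} [Fintype n] (v : n → ℂ) (hv : v ≠ 0) : star v ⬝ᵥ v ≠ 0 := by
  rwa [Ne, dotProduct_star_self_eq_zero]

/-- Rank one matrix built from `v`. -/
lemma rank_one_aux {n : Type*} [Fintype n] [DecidableEq n] (v : n → ℂ) (hv : v ≠ 0) :
    ∃ P : Matrix n n ℂ, Pᴴ = P ∧ P * P = P ∧ P.trace = 1 ∧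
      ∀ (B : Matrix n n ℂ) (c : ℂ), B *ᵥ v = c • v → Bᴴ *ᵥ v = star c • v → Commute P B := by
  have hs : star v ⬝ᵥ v ≠ 0 := dot_ne_aux v hv
  have hss : star (star v ⬝ᵥ v) = star v ⬝ᵥ v := by
    rw [← star_dotProduct_star, star_star]
  refine ⟨(star v ⬝ᵥ v)⁻¹ • vecMulVec v (star v), ?_, ?_, ?_, ?_⟩
  · rw [conjTranspose_smul, star_inv₀, hss, conjTranspose_vecMulVec, star_star]
  · rw [Matrix.smul_mul, Matrix.mul_smul, vecMulVec_mul_vecMulVec, smul_smul]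
    ext i j
    simp [vecMulVec_apply]
    field_simp
  · rw [trace_smul, trace_vecMulVec, dotProduct_comm v, smul_eq_mul, inv_mul_cancel₀ hs]
  · intro B c h1 h2
    have h3 : star v ᵥ* B = c • star v := by
      have := congrArg star h2
      rw [star_mulVec, conjTranspose_conjTranspose] at this
      simpa using this
    show _ * B = B * _
    rw [Matrix.smul_mul, Matrix.mul_smul, vecMulVec_mul, mul_vecMulVec, h1, h3]
    ext i j
    simp [vecMulVec_apply]

lemma eigen_aux (N : ℕ) (G : Subgroup (Equiv.Perm (Fin N)))
    (A : Matrix (Fin N → Fin 2) (Fin N → Fin 2) ℂ)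
    (hA : ∀ α ∈ G, Commute A (qubitPermMatrix α)) :
    ∃ v : (Fin N → Fin 2) → ℂ, v ≠ 0 ∧ (∀ α ∈ G, qubitPermMatrix α *ᵥ v = v) ∧
      ∃ c : ℂ, A *ᵥ v = c • v := by
  let W : Submodule ℂ ((Fin N → Fin 2) → ℂ) :=
    { carrier := {v | ∀ α ∈ G, qubitPermMatrix α *ᵥ v = v}
      add_mem' := by
        intro u v hu hv α hα
        rw [Matrix.mulVec_add, hu α hα, hv α hα]
      zero_mem' := by intro α _; simp
      smul_mem' := by
        intro c v hv α hα
        rw [Matrix.mulVec_smul, hv α hα] }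
  have hW : ∀ v ∈ W, Matrix.mulVecLin A v ∈ W := by
    intro v hv α hα
    rw [Matrix.mulVecLin_apply, Matrix.mulVec_mulVec, ← (hA α hα).eq, ← Matrix.mulVec_mulVec,
      hv α hα]
  have h1 : (fun _ => 1 : (Fin N → Fin 2) → ℂ) ∈ W := by
    intro α _
    ext x
    rw [qubit_mulVec]
  have : Nontrivial W := ⟨⟨⟨_, h1⟩, 0, fun h => by
    have := congrFun (congrArg Subtype.val h) (fun _ => 0)
    simp at this⟩⟩
  obtain ⟨c, hc⟩ := Module.End.exists_eigenvalue ((Matrix.mulVecLin A).restrict hW)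
  obtain ⟨w, hw⟩ := hc.exists_hasEigenvector
  refine ⟨w.1, fun h => hw.2 (Subtype.ext h), w.2, c, ?_⟩
  exact congrArg Subtype.val hw.apply_eq_smul

/-- For `N ≥ 1` and a subgroup `G` of the permutation group of `Fin N`, every
`A ∈ SU(2^N)` satisfying `U_α A U_α⁻¹ = A` for all `α ∈ G` is the exponential of a traceless
skew-Hermitian matrix `a` satisfying `U_α a U_α⁻¹ = a` for all `α ∈ G`. -/
theorem exp_surjective_Gsu_GSU (N : ℕ) (hN : 1 ≤ N) (G : Subgroup (Equiv.Perm (Fin N)))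
    (A : Matrix (Fin N → Fin 2) (Fin N → Fin 2) ℂ)
    (hA : A * Aᴴ = 1 ∧ A.det = 1 ∧
      ∀ α ∈ G, qubitPermMatrix α * A * (qubitPermMatrix α)⁻¹ = A) :
    ∃ a : Matrix (Fin N → Fin 2) (Fin N → Fin 2) ℂ,
      aᴴ = -a ∧ a.trace = 0 ∧
      (∀ α ∈ G, qubitPermMatrix α * a * (qubitPermMatrix α)⁻¹ = a) ∧
      A = NormedSpace.exp a := by
  obtain ⟨hA1, hdet, hG⟩ := hA
  have hA1' : Aᴴ * A = 1 := mul_eq_one_comm.mp hA1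
  have hG' : ∀ α ∈ G, Commute A (qubitPermMatrix α) :=
    fun α hα => (qubit_conj_iff α A).mp (hG α hα)
  obtain ⟨a, ha, hexp, hcomm⟩ := exists_log_aux A hA1
  obtain ⟨v, hv, hvG, c, hc⟩ := eigen_aux N G A hG'
  obtain ⟨P, hP, hPP, hPt, hPc⟩ := rank_one_aux v hv
  have hs : star v ⬝ᵥ v ≠ 0 := dot_ne_aux v hv
  have hcc : star c * c = 1 := by
    have h : star (A *ᵥ v) ⬝ᵥ (A *ᵥ v) = star v ⬝ᵥ v := by
      rw [star_mulVec, ← Matrix.dotProduct_mulVec, Matrix.mulVec_mulVec, hA1', Matrix.one_mulVec]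
    rw [hc, star_smul, smul_dotProduct, dotProduct_smul, smul_eq_mul, smul_eq_mul,
      ← mul_assoc] at h
    exact mul_right_cancel₀ hs (h.trans (one_mul _).symm)
  have hc' : Aᴴ *ᵥ v = star c • v := by
    have h : Aᴴ *ᵥ (A *ᵥ v) = v := by rw [Matrix.mulVec_mulVec, hA1', Matrix.one_mulVec]
    rw [hc, Matrix.mulVec_smul] at h
    have h2 := congrArg (fun w => star c • w) h
    simpa only [smul_smul, hcc, one_smul] using h2
  have hPA : Commute P A := hPc A c hc hc'
  have hPG : ∀ α ∈ G, Commute P (qubitPermMatrix α) := by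
    intro α hα
    refine hPc _ 1 (by rw [hvG α hα, one_smul]) ?_
    rw [qubit_conjTranspose, hvG _ (G.inv_mem hα)]
    simp
  have haP : Commute a P := hcomm P hPA.symm
  have htr : Complex.exp a.trace = 1 := by rw [← det_exp_aux a ha, ← hexp, hdet]
  obtain ⟨k, hk⟩ := Complex.exp_eq_one_iff.mp htr
  refine ⟨a + (-(k * (2 * Real.pi * Complex.I)) : ℂ) • P, ?_, ?_, ?_, ?_⟩
  · rw [conjTranspose_add, conjTranspose_smul, ha, hP, neg_add, ← neg_smul]
    congr 2
    simp
  · rw [trace_add, trace_smul, hPt, hk]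
    simp
  · intro α hα
    rw [qubit_conj_iff]
    exact (hcomm _ (hG' α hα)).add_left ((hPG α hα).smul_left _)
  · rw [Matrix.exp_add_of_commute _ _ (haP.smul_right _), exp_proj_aux P hP hPP k, Matrix.mul_one]
    exact hexp
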